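/- The translation (·)† from the λμ-calculus to the λ̄μμ̃-calculus preserves simple typing: if Γ ⊢ t : A | Δ is derivable in the λμ type system, then Γ ⊢ t† : A | Δ is derivable in the λ̄μμ̃ type system (and analogously, λμ-command judgments c : (Γ ⊢ Δ) and λμ-context judgments Γ | e : A ⊢ Δ are mapped to derivable λ̄μμ̃ judgments c† : (Γ ⊢ Δ) and Γ | e† : A ⊢ Δ). -/

import Mathlib

set_option autoImplicit true

namespace CHTyping

/-- Simple types `T ::= X | T → T`. -/
inductive Ty : Type
  | base : ℕ → Ty
  | arr : Ty → Ty → Ty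

/-- Typing environments: finite-domain assignments of simple types to
(named) variables, represented as partial functions. -/
abbrev Cx : Type := ℕ → Option Ty

/-- The empty environment. -/
def emp : Cx := fun _ => none

/-- The one-point environment `x : A`. -/
def single (x : ℕ) (A : Ty) : Cx := fun y => if y = x then some A else none

/-- Union `Γ, Γ'` of two environments (asserted compatible). -/
def union (Γ Γ' : Cx) : Cx := fun x => (Γ x).orElse (fun _ => Γ' x)

/-- Two environments match each other on the intersection of their domains. -/
def Compat (Γ Γ' : Cx) : Prop := ∀ x A B, Γ x = some A → Γ' x = some B → A = B

/-- `Γ ∖ {x : A}`: removal of a variable from an environment. -/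
def remove (Γ : Cx) (x : ℕ) : Cx := fun y => if y = x then none else Γ y

/-- `Γ, x : A`: extension of an environment. -/
def extend (Γ : Cx) (x : ℕ) (A : Ty) : Cx := fun y => if y = x then some A else Γ y

/-! ## The λμ-calculus (named variables) -/

mutual
  /-- λμ-terms `t ::= x | λx.t | t t | μα.c`. -/
  inductive Tm : Type
    | var : ℕ → Tm
    | abs : ℕ → Tm → Tm
    | app : Tm → Tm → Tm
    | mabs : ℕ → Cm → Tm
  /-- λμ-commands `c ::= [α]t`. -/
  inductive Cm : Type
    | cmd : ℕ → Tm → Cm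
end

/-- λμ-contexts `e ::= ⟨α⟩ | ⟨β⟩(t ·) | e · t`. -/
inductive Ct : Type
  | cvar : ℕ → Ct
  | push : ℕ → Tm → Ct
  | cons : Ct → Tm → Ct

/-- Filling a λμ-context with a term: `⟨α⟩⟨t⟩ = [α]t`,
`(⟨β⟩(u ·))⟨t⟩ = [β](u t)`, `(h · u)⟨t⟩ = h⟨t u⟩`. -/
def fill : Ct → Tm → Cm
  | .cvar a, t => .cmd a t
  | .push b u, t => .cmd b (.app u t)
  | .cons h u, t => fill h (.app t u)

/-! ### The simple type system of λμ.
`TT Γ t A Δ` is the judgment `Γ ⊢ t : A | Δ`, `TC c Γ Δ` is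
`c : (Γ ⊢ Δ)` and `TE Γ e A Δ` is `Γ | e : A ⊢ Δ`. -/

mutual
  inductive TT : Cx → Tm → Ty → Cx → Prop
    | var (x : ℕ) (A : Ty) : TT (single x A) (.var x) A emp
    | abs {Γ : Cx} {t : Tm} {B : Ty} {Δ : Cx} {x : ℕ} {A : Ty} :
        TT Γ t B Δ → (Γ x = some A ∨ Γ x = none) →
        TT (remove Γ x) (.abs x t) (.arr A B) Δ
    | app {Γ Γ' : Cx} {u v : Tm} {A B : Ty} {Δ Δ' : Cx} :
        TT Γ u (.arr A B) Δ → TT Γ' v A Δ' → Compat Γ Γ' → Compat Δ Δ' →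
        TT (union Γ Γ') (.app u v) B (union Δ Δ')
    | mabs {c : Cm} {Γ Δ : Cx} {a : ℕ} {A : Ty} :
        TC c Γ Δ → (Δ a = some A ∨ Δ a = none) →
        TT Γ (.mabs a c) A (remove Δ a)
  inductive TC : Cm → Cx → Cx → Prop
    | cmd {Γ : Cx} {t : Tm} {A : Ty} {Δ : Cx} {a : ℕ} :
        TT Γ t A Δ → (Δ a = some A ∨ Δ a = none) →
        TC (.cmd a t) Γ (extend Δ a A)
end

inductive TE : Cx → Ct → Ty → Cx → Prop
  | cvar (a : ℕ) (A : Ty) : TE emp (.cvar a) A (single a A)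
  | push {Γ : Cx} {t : Tm} {A B : Ty} {Δ : Cx} {b : ℕ} :
      TT Γ t (.arr A B) Δ → (Δ b = some B ∨ Δ b = none) →
      TE Γ (.push b t) A (extend Δ b B)
  | cons {Γ Γ' : Cx} {t : Tm} {e : Ct} {A B : Ty} {Δ Δ' : Cx} :
      TT Γ t A Δ → TE Γ' e B Δ' → Compat Γ Γ' → Compat Δ Δ' →
      TE (union Γ Γ') (.cons e t) (.arr A B) (union Δ Δ')

/-! ## The λ̄μμ̃-calculus (named variables) -/

mutual
  /-- λ̄μμ̃-terms `t ::= x | λx.t | μα.c`. -/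
  inductive BTm : Type
    | var : ℕ → BTm
    | abs : ℕ → BTm → BTm
    | mabs : ℕ → BCm → BTm
  /-- λ̄μμ̃-commands `c ::= ⟨t | e⟩`. -/
  inductive BCm : Type
    | cut : BTm → BCt → BCm
  /-- λ̄μμ̃-contexts `e ::= α | t · e | μ̃x.c`. -/
  inductive BCt : Type
    | cvar : ℕ → BCt
    | cons : BTm → BCt → BCt
    | tmu : ℕ → BCm → BCt
end

/-! ### The simple type system of λ̄μμ̃.
`BT Γ t A Δ` is `Γ ⊢ t : A | Δ`, `BC c Γ Δ` is `c : (Γ ⊢ Δ)` and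
`BE Γ e A Δ` is `Γ | e : A ⊢ Δ`. -/

mutual
  inductive BT : Cx → BTm → Ty → Cx → Prop
    | var (x : ℕ) (A : Ty) : BT (single x A) (.var x) A emp
    | abs {Γ : Cx} {t : BTm} {B : Ty} {Δ : Cx} {x : ℕ} {A : Ty} :
        BT Γ t B Δ → (Γ x = some A ∨ Γ x = none) →
        BT (remove Γ x) (.abs x t) (.arr A B) Δ
    | mabs {c : BCm} {Γ Δ : Cx} {a : ℕ} {A : Ty} :
        BC c Γ Δ → (Δ a = some A ∨ Δ a = none) →
        BT Γ (.mabs a c) A (remove Δ a)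
  inductive BC : BCm → Cx → Cx → Prop
    | cut {Γ Γ' : Cx} {t : BTm} {e : BCt} {A : Ty} {Δ Δ' : Cx} :
        BT Γ t A Δ → BE Γ' e A Δ' → Compat Γ Γ' → Compat Δ Δ' →
        BC (.cut t e) (union Γ Γ') (union Δ Δ')
  inductive BE : Cx → BCt → Ty → Cx → Prop
    | cvar (a : ℕ) (A : Ty) : BE emp (.cvar a) A (single a A)
    | cons {Γ Γ' : Cx} {t : BTm} {e : BCt} {A B : Ty} {Δ Δ' : Cx} :
        BT Γ t A Δ → BE Γ' e B Δ' → Compat Γ Γ' → Compat Δ Δ' →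
        BE (union Γ Γ') (.cons t e) (.arr A B) (union Δ Δ')
    | tmu {c : BCm} {Γ Δ : Cx} {x : ℕ} {A : Ty} :
        BC c Γ Δ → (Γ x = some A ∨ Γ x = none) →
        BE (remove Γ x) (.tmu x c) A Δ
end

/-! ### Fresh names for the translation `(·)†` -/

mutual
  /-- A strict upper bound on the λ-variable names occurring in a λ̄μμ̃-term. -/
  def fvLT : BTm → ℕ
    | .var x => x + 1
    | .abs x t => max (x + 1) (fvLT t)
    | .mabs _ c => fvLC c
  def fvLC : BCm → ℕ
    | .cut t e => max (fvLT t) (fvLE e)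
  def fvLE : BCt → ℕ
    | .cvar _ => 0
    | .cons t e => max (fvLT t) (fvLE e)
    | .tmu x c => max (x + 1) (fvLC c)
end

mutual
  /-- A strict upper bound on the μ-variable names occurring in a λ̄μμ̃-term. -/
  def fvMT : BTm → ℕ
    | .var _ => 0
    | .abs _ t => fvMT t
    | .mabs a c => max (a + 1) (fvMC c)
  def fvMC : BCm → ℕ
    | .cut t e => max (fvMT t) (fvME e)
  def fvME : BCt → ℕ
    | .cvar a => a + 1
    | .cons t e => max (fvMT t) (fvME e)
    | .tmu _ c => fvMC c
end

/-! ### The translation `(·)†` from λμ to λ̄μμ̃ -/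

mutual
  /-- `x† = x`, `(λx.u)† = λx.u†`, `(u v)† = μβ.⟨v† | μ̃y.⟨u† | y·β⟩⟩`
  (`y`, `β` fresh), `(μα.c)† = μα.c†`. -/
  def dagT : Tm → BTm
    | .var x => .var x
    | .abs x t => .abs x (dagT t)
    | .app u v =>
        let U := dagT u
        let V := dagT v
        let y := max (fvLT U) (fvLT V)
        let b := max (fvMT U) (fvMT V)
        .mabs b (.cut V (.tmu y (.cut U (.cons (.var y) (.cvar b)))))
    | .mabs a c => .mabs a (dagC c)
  /-- `([α]t)† = ⟨t† | α⟩`. -/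
  def dagC : Cm → BCm
    | .cmd a t => .cut (dagT t) (.cvar a)
end

/-- `⟨α⟩† = α`, `(⟨β⟩(t ·))† = μ̃y.⟨t† | y·β⟩` (`y` fresh), `(h · t)† = t† · h†`. -/
def dagE : Ct → BCt
  | .cvar a => .cvar a
  | .push b t =>
      let T := dagT t
      .tmu (fvLT T) (.cut T (.cons (.var (fvLT T)) (.cvar b)))
  | .cons e t => .cons (dagT t) (dagE e)

/-!
The translation commutes with the typing rules: each λμ rule becomes an admissible rule of λ̄μμ̃.
The only rules that are not literally present there are those for `[α]t`, `⟨β⟩(t ·)` and `u v`;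
they are derived by cutting against `α`, respectively against the stack `y · β`, and rebinding `y`
and `β`. Rebinding restores the original environments because typing environments are minimal: they
declare only variables that occur in the term, so a name above all occurring ones is undeclared.
-/

section Environments

variable {Γ Γ' : Cx} {x m n : ℕ} {A : Ty}

protected theorem Compat.symm (h : Compat Γ Γ') : Compat Γ' Γ :=
  fun x A B hA hB => (h x B A hB hA).symm

theorem compat_emp (Γ : Cx) : Compat Γ emp := nofun

theorem emp_compat (Γ : Cx) : Compat emp Γ := (compat_emp Γ).symm

theorem Compat.extend_right (h : Compat Γ Γ') (hx : Γ x = some A ∨ Γ x = none) :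
    Compat Γ (extend Γ' x A) := by
  intro y B C hB hC
  by_cases hy : y = x
  · subst hy
    simp_all [extend]
  · exact h y B C hB (by simpa [extend, hy] using hC)

theorem compat_single (h : Γ x = some A ∨ Γ x = none) : Compat Γ (single x A) :=
  (compat_emp Γ).extend_right h

theorem emp_union (Γ : Cx) : union emp Γ = Γ := rfl

theorem union_emp (Γ : Cx) : union Γ emp = Γ := by
  funext y
  cases h : Γ y <;> simp [union, emp, h]

theorem union_comm (h : Compat Γ Γ') : union Γ Γ' = union Γ' Γ := by
  funext y
  have hy := h y
  cases hΓ : Γ y <;> cases hΓ' : Γ' y <;> simp_all [union]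

theorem union_eq_none (h : Γ x = none) (h' : Γ' x = none) : union Γ Γ' x = none := by
  simp [union, h, h']

theorem union_extend (h : Γ x = some A ∨ Γ x = none) :
    union Γ (extend Γ' x A) = extend (union Γ Γ') x A := by
  funext y
  by_cases hy : y = x
  · subst hy
    rcases h with h | h <;> simp [union, extend, h]
  · simp [union, extend, hy]

theorem union_single (h : Γ x = some A ∨ Γ x = none) : union Γ (single x A) = extend Γ x A :=
  (union_extend (Γ' := emp) h).trans (by rw [union_emp])

theorem extend_self (Γ : Cx) (x : ℕ) (A : Ty) : extend Γ x A x = some A :=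
  if_pos rfl

theorem remove_extend (h : Γ x = none) : remove (extend Γ x A) x = Γ := by
  funext y
  by_cases hy : y = x <;> simp [remove, extend, hy, h]

/-- `DomBelow Γ n` says that every variable declared in `Γ` is less than `n`, so that all names
from `n` on are fresh for `Γ`. -/
def DomBelow (Γ : Cx) (n : ℕ) : Prop := ∀ x, n ≤ x → Γ x = none

theorem DomBelow.mono (h : DomBelow Γ m) (hmn : m ≤ n) : DomBelow Γ n :=
  fun x hx => h x (hmn.trans hx)

theorem domBelow_emp (n : ℕ) : DomBelow emp n := fun _ _ => rfl

theorem domBelow_single (x : ℕ) (A : Ty) : DomBelow (single x A) (x + 1) :=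
  fun _ hy => if_neg (Nat.ne_of_gt hy)

protected theorem DomBelow.remove (h : DomBelow Γ n) (x : ℕ) : DomBelow (remove Γ x) n := by
  intro y hy
  simp [remove, h y hy]

protected theorem DomBelow.union (h : DomBelow Γ m) (h' : DomBelow Γ' n) :
    DomBelow (union Γ Γ') (max m n) :=
  fun x hx => union_eq_none (h x (le_of_max_le_left hx)) (h' x (le_of_max_le_right hx))

end Environments

mutual
  theorem BT.domBelow_fvLT {Γ Δ : Cx} {t : BTm} {A : Ty} : BT Γ t A Δ → DomBelow Γ (fvLT t)
    | .var x A => domBelow_single x A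
    | .abs ht _ => (ht.domBelow_fvLT.remove _).mono (le_max_right _ _)
    | .mabs hc _ => hc.domBelow_fvLC
  theorem BC.domBelow_fvLC {Γ Δ : Cx} {c : BCm} : BC c Γ Δ → DomBelow Γ (fvLC c)
    | .cut ht he _ _ => ht.domBelow_fvLT.union he.domBelow_fvLE
  theorem BE.domBelow_fvLE {Γ Δ : Cx} {e : BCt} {A : Ty} : BE Γ e A Δ → DomBelow Γ (fvLE e)
    | .cvar _ _ => domBelow_emp _
    | .cons ht he _ _ => ht.domBelow_fvLT.union he.domBelow_fvLE
    | .tmu hc _ => (hc.domBelow_fvLC.remove _).mono (le_max_right _ _)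
end

mutual
  theorem BT.domBelow_fvMT {Γ Δ : Cx} {t : BTm} {A : Ty} : BT Γ t A Δ → DomBelow Δ (fvMT t)
    | .var _ _ => domBelow_emp _
    | .abs ht _ => ht.domBelow_fvMT
    | .mabs hc _ => (hc.domBelow_fvMC.remove _).mono (le_max_right _ _)
  theorem BC.domBelow_fvMC {Γ Δ : Cx} {c : BCm} : BC c Γ Δ → DomBelow Δ (fvMC c)
    | .cut ht he _ _ => ht.domBelow_fvMT.union he.domBelow_fvME
  theorem BE.domBelow_fvME {Γ Δ : Cx} {e : BCt} {A : Ty} : BE Γ e A Δ → DomBelow Δ (fvME e)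
    | .cvar a A => domBelow_single a A
    | .cons ht he _ _ => ht.domBelow_fvMT.union he.domBelow_fvME
    | .tmu hc _ => hc.domBelow_fvMC
end

section AdmissibleRules

variable {Γ Γ' Δ Δ' : Cx} {t u v : BTm} {A B : Ty} {y a b : ℕ}

theorem BC.cmd (ht : BT Γ t A Δ) (ha : Δ a = some A ∨ Δ a = none) :
    BC (.cut t (.cvar a)) Γ (extend Δ a A) := by
  simpa only [union_emp, union_single ha] using
    BC.cut ht (.cvar a A) (compat_emp Γ) (compat_single ha)

theorem BE.stack (y b : ℕ) (A B : Ty) :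
    BE (single y A) (.cons (.var y) (.cvar b)) (.arr A B) (single b B) := by
  simpa only [union_emp, emp_union] using
    BE.cons (.var y A) (.cvar b B) (compat_emp _) (emp_compat _)

theorem BE.push (ht : BT Γ t (.arr A B) Δ) (hy : Γ y = none) (hb : Δ b = some B ∨ Δ b = none) :
    BE Γ (.tmu y (.cut t (.cons (.var y) (.cvar b)))) A (extend Δ b B) := by
  have hcut : BC (.cut t (.cons (.var y) (.cvar b))) (extend Γ y A) (extend Δ b B) := by
    simpa only [union_single (.inr hy), union_single hb] using
      BC.cut ht (.stack y b A B) (compat_single (.inr hy)) (compat_single hb)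
  simpa only [remove_extend hy] using BE.tmu hcut (.inl (extend_self Γ y A))

theorem BT.app (hu : BT Γ u (.arr A B) Δ) (hv : BT Γ' v A Δ') (hΓ : Compat Γ Γ')
    (hΔ : Compat Δ Δ') (hy : Γ y = none) (hb : Δ b = none) (hb' : Δ' b = none) :
    BT (union Γ Γ') (.mabs b (.cut v (.tmu y (.cut u (.cons (.var y) (.cvar b)))))) B
      (union Δ Δ') := by
  have hcut : BC (.cut v (.tmu y (.cut u (.cons (.var y) (.cvar b)))))
      (union Γ Γ') (extend (union Δ Δ') b B) := by
    simpa only [union_extend (.inr hb'), union_comm hΓ, union_comm hΔ] using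
      BC.cut hv (BE.push hu hy (.inr hb)) hΓ.symm (hΔ.symm.extend_right (.inr hb'))
  simpa only [remove_extend (union_eq_none hb hb')] using
    BT.mabs hcut (.inl (extend_self (union Δ Δ') b B))

end AdmissibleRules

mutual
  theorem TT.dag {Γ Δ : Cx} {t : Tm} {A : Ty} : TT Γ t A Δ → BT Γ (dagT t) A Δ
    | .var x A => .var x A
    | .abs ht hx => .abs ht.dag hx
    | .app hu hv hΓ hΔ =>
        .app hu.dag hv.dag hΓ hΔ
          (hu.dag.domBelow_fvLT _ (le_max_left _ _))
          (hu.dag.domBelow_fvMT _ (le_max_left _ _))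
          (hv.dag.domBelow_fvMT _ (le_max_right _ _))
    | .mabs hc ha => .mabs hc.dag ha
  theorem TC.dag {Γ Δ : Cx} {c : Cm} : TC c Γ Δ → BC (dagC c) Γ Δ
    | .cmd ht ha => .cmd ht.dag ha
end

theorem TE.dag {Γ Δ : Cx} {e : Ct} {A : Ty} : TE Γ e A Δ → BE Γ (dagE e) A Δ
  | .cvar a A => .cvar a A
  | .push ht hb => .push ht.dag (ht.dag.domBelow_fvLT _ le_rfl) hb
  | .cons ht he hΓ hΔ => .cons ht.dag he.dag hΓ hΔ

/-- the translation `(·)†` preserves simple typing: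
each derivable λμ judgment for `t`, `c` or `e` gives the corresponding
derivable λ̄μμ̃ judgment for `t†`, `c†` or `e†`. -/
theorem dag_type_compatible :
    (∀ (Γ : Cx) (t : Tm) (A : Ty) (Δ : Cx), TT Γ t A Δ → BT Γ (dagT t) A Δ) ∧
    (∀ (c : Cm) (Γ Δ : Cx), TC c Γ Δ → BC (dagC c) Γ Δ) ∧
    (∀ (Γ : Cx) (e : Ct) (A : Ty) (Δ : Cx), TE Γ e A Δ → BE Γ (dagE e) A Δ) := by
  exact ⟨fun _ _ _ _ h => h.dag, fun _ _ _ h => h.dag, fun _ _ _ _ h => h.dag⟩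

end CHTyping
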